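/- Let 1 < p < ∞ and let Ω ⊂ ℝ^N be a domain with Lipschitz boundary, with the anisotropic distance d_H(x) = inf_{y ∈ ∂Ω} H⁰(x − y); d_H is Lipschitz on Ω with H(∇d_H(x)) = 1 for a.e. x ∈ Ω. Assume that ∫_Ω (∇_ξ H)(∇d_H(x)) · ∇φ(x) dx ≥ 0 for every nonnegative φ ∈ C_c^∞(Ω) (i.e. −Δ_{H,p} d_H ≥ 0 distributionally, using H(∇d_H) = 1 a.e.). Then for every u ∈ C_c^∞(Ω), ((p−1)/p)^p · ∫_Ω |u(x)|^p / d_H(x)^p dx ≤ ∫_Ω H(∇u(x))^p dx. -/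

import Mathlib

/-!
The proof tests the distributional inequality with `φ = |u|^p d^{1-p}`, where `d = dH`. Put
`A = ∇H(∇d)`. Subadditivity of `H` gives `|A · v| ≤ H v` (`IsFinslerNorm.fderiv_le` and evenness),
while Euler's identity (`IsFinslerNorm.fderiv_self`) and the eikonal equation give `A · ∇d = 1`
almost everywhere. Hence, with `t = |u| / d`,

  `A · ∇φ ≤ p t^{p-1} H(∇u) - (p-1) t^p`,

and Young's inequality bounds `((p-1)/p)^{p-1}` times the right side by
`H(∇u)^p - ((p-1)/p)^p t^p` (`pointwise_aux`). Integrating and using `0 ≤ ∫ A · ∇φ` yields the claim.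

The function `φ` is only Lipschitz, so the inequality `0 ≤ ∫ A · ∇φ`, assumed for smooth `φ`, is first
extended by mollification (`super_lipschitz`): by Rademacher's theorem the gradient of the mollified
function is the mollified gradient, which converges almost everywhere and stays bounded by the
Lipschitz constant, so dominated convergence applies. That `φ` is Lipschitz uses a positive
lower bound for `d` on the support of `u` (`exists_pos_le_dist`).
-/

open MeasureTheory Set Filter
open scoped RealInnerProductSpace Topology ENNReal NNReal

noncomputable section

/-- `ℝ^N` as a Euclidean space. -/
abbrev Euc (N : ℕ) := EuclideanSpace ℝ (Fin N)

/-- `H : ℝ^N → ℝ` is a Finsler norm: nonnegative, convex, `C²` away from the origin,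
even and positively one-homogeneous, comparable to the Euclidean norm, and with
positive definite Hessian of `H²` away from the origin. -/
structure IsFinslerNorm {N : ℕ} (H : Euc N → ℝ) : Prop where
  nonneg : ∀ ξ, 0 ≤ H ξ
  convexOn : ConvexOn ℝ Set.univ H
  smooth : ContDiffOn ℝ 2 H {(0 : Euc N)}ᶜ
  homog : ∀ (t : ℝ) (ξ : Euc N), H (t • ξ) = |t| * H ξ
  bounds : ∃ a b : ℝ, 0 < a ∧ a ≤ b ∧ ∀ ξ : Euc N, a * ‖ξ‖ ≤ H ξ ∧ H ξ ≤ b * ‖ξ‖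
  hessPosDef : ∀ ξ : Euc N, ξ ≠ 0 → ∀ v : Euc N, v ≠ 0 →
    0 < iteratedFDeriv ℝ 2 (fun x => (H x) ^ 2) ξ ![v, v]

/-- The polar function `H⁰(x) = sup_{ξ ≠ 0} (ξ·x)/H(ξ)` of a Finsler norm. -/
def polarNorm {N : ℕ} (H : Euc N → ℝ) (x : Euc N) : ℝ :=
  sSup {r : ℝ | ∃ ξ : Euc N, ξ ≠ 0 ∧ r = ⟪ξ, x⟫ / H ξ}

/-- `u ∈ C_c^∞(Ω)`: a smooth function with compact support contained in `Ω`. -/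
def IsTestFun {N : ℕ} (Ω : Set (Euc N)) (u : Euc N → ℝ) : Prop :=
  ContDiff ℝ (⊤ : ℕ∞) u ∧ HasCompactSupport u ∧ tsupport u ⊆ Ω

/-! ### Finsler norms -/

namespace IsFinslerNorm

variable {N : ℕ} {H : Euc N → ℝ}

lemma add_le (hH : IsFinslerNorm H) (x y : Euc N) : H (x + y) ≤ H x + H y := by
  have h := hH.convexOn.2 (mem_univ x) (mem_univ y) (show (0 : ℝ) ≤ 1 / 2 by norm_num)
    (show (0 : ℝ) ≤ 1 / 2 by norm_num) (by norm_num)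
  have h2 : H (x + y) = 2 * H ((1 / 2 : ℝ) • x + (1 / 2 : ℝ) • y) := by
    rw [← smul_add, hH.homog, abs_of_pos (by norm_num)]
    ring
  simp only [smul_eq_mul] at h
  linarith

lemma lipschitz (hH : IsFinslerNorm H) : ∃ C : ℝ≥0, LipschitzWith C H := by
  obtain ⟨a, b, ha, hab, h⟩ := hH.bounds
  refine ⟨_, LipschitzWith.of_le_add_mul' b fun x y => ?_⟩
  have h1 := hH.add_le y (x - y)
  rw [add_sub_cancel] at h1
  rw [dist_eq_norm]
  linarith [(h (x - y)).2]

lemma zero (hH : IsFinslerNorm H) : H 0 = 0 := by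
  simpa using hH.homog 0 0

lemma differentiableAt (hH : IsFinslerNorm H) {x : Euc N} (hx : x ≠ 0) :
    DifferentiableAt ℝ H x :=
  (hH.smooth.contDiffAt (isOpen_compl_singleton.mem_nhds hx)).differentiableAt (by norm_num)

/-- Subgradient bound from subadditivity; at a point where `H` is not differentiable the junk
value `0` of the derivative satisfies it as well. -/
lemma fderiv_le (hH : IsFinslerNorm H) (x v : Euc N) : fderiv ℝ H x v ≤ H v := by
  by_cases hd : DifferentiableAt ℝ H x
  · have h := hd.hasFDerivAt.hasLineDerivAt v
    have h2 := h.tendsto_slope_zero_right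
    refine le_of_tendsto h2 ?_
    filter_upwards [self_mem_nhdsWithin] with t ht
    have ht : 0 < t := ht
    have h3 := hH.add_le x (t • v)
    rw [hH.homog, abs_of_pos ht] at h3
    simp only [smul_eq_mul]
    rw [inv_mul_le_iff₀ ht]
    linarith
  · rw [fderiv_zero_of_not_differentiableAt hd]
    exact hH.nonneg v

/-- Euler's identity for the one-homogeneous function `H`. -/
lemma fderiv_self (hH : IsFinslerNorm H) {x : Euc N} (hx : x ≠ 0) : fderiv ℝ H x x = H x := by
  have h := (hH.differentiableAt hx).hasFDerivAt.hasLineDerivAt x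
  refine h.unique ?_
  have h1 : HasDerivAt (fun t : ℝ => (1 + t) * H x) (H x) 0 := by
    simpa using ((hasDerivAt_id (0 : ℝ)).const_add 1).mul_const (H x)
  refine h1.congr_of_eventuallyEq ?_
  filter_upwards [Ioi_mem_nhds (show (-1 : ℝ) < 0 by norm_num)] with t ht
  have ht : -1 < t := ht
  rw [show x + t • x = (1 + t) • x by rw [add_smul, one_smul], hH.homog, abs_of_pos (by linarith)]

/-- The polar norm dominates a multiple of the Euclidean norm. -/
lemma exists_le_polarNorm (hH : IsFinslerNorm H) :
    ∃ b : ℝ, 0 < b ∧ ∀ x, b * ‖x‖ ≤ polarNorm H x := by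
  obtain ⟨a, b, ha, hab, h⟩ := hH.bounds
  have hb : 0 < b := ha.trans_le hab
  refine ⟨b⁻¹, inv_pos.2 hb, fun x => ?_⟩
  have hbdd : BddAbove {r : ℝ | ∃ ξ : Euc N, ξ ≠ 0 ∧ r = ⟪ξ, x⟫ / H ξ} := by
    refine ⟨a⁻¹ * ‖x‖, ?_⟩
    rintro r ⟨ξ, hξ, rfl⟩
    have hξ' := norm_pos_iff.2 hξ
    have hHξ : 0 < H ξ := (mul_pos ha hξ').trans_le (h ξ).1
    rw [div_le_iff₀ hHξ]
    calc ⟪ξ, x⟫ ≤ ‖ξ‖ * ‖x‖ := real_inner_le_norm _ _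
      _ = a⁻¹ * ‖x‖ * (a * ‖ξ‖) := by field_simp
      _ ≤ _ := by gcongr; exact (h ξ).1
  by_cases hx : x = 0
  · subst hx
    simp only [norm_zero, mul_zero]
    refine Real.sSup_nonneg ?_
    rintro r ⟨ξ, -, rfl⟩
    simp
  · have hx' := norm_pos_iff.2 hx
    have hHx : 0 < H x := (mul_pos ha hx').trans_le (h x).1
    refine le_trans ?_ (le_csSup hbdd ⟨x, hx, rfl⟩)
    rw [real_inner_self_eq_norm_sq, le_div_iff₀ hHx]
    calc b⁻¹ * ‖x‖ * H x ≤ b⁻¹ * ‖x‖ * (b * ‖x‖) := by gcongr; exact (h x).2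
      _ = ‖x‖ ^ 2 := by field_simp

end IsFinslerNorm

/-! ### Lipschitz test functions -/

lemma inner_gradient_eq {N : ℕ} (a : Euc N) (f : Euc N → ℝ) (x : Euc N) :
    ⟪a, gradient f x⟫ = fderiv ℝ f x a := by
  rw [real_inner_comm, gradient, InnerProductSpace.toDual_symm_apply]

open ContinuousLinearMap in
/-- A Lipschitz function is differentiable almost everywhere, so mollification commutes with
differentiation. -/
lemma hasFDerivAt_mollify {N : ℕ} {φ : Euc N → ℝ} {C : ℝ≥0} (hφ : LipschitzWith C φ)
    (ρ : ContDiffBump (0 : Euc N)) (x : Euc N) :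
    HasFDerivAt (convolution (ρ.normed volume) φ (lsmul ℝ ℝ) volume)
      (convolution (ρ.normed volume) (fderiv ℝ φ) (lsmul ℝ ℝ) volume x) x := by
  have hint : ∀ y, Integrable (fun t => ρ.normed volume t • φ (y - t)) := fun y =>
    (ρ.continuous_normed.smul (hφ.continuous.comp (continuous_const.sub continuous_id)))
      |>.integrable_of_hasCompactSupport (ρ.hasCompactSupport_normed.smul_right)
  refine (hasFDerivAt_integral_of_dominated_loc_of_lip (s := univ) (μ := volume)
    (F := fun y t => ρ.normed volume t • φ (y - t))
    (F' := fun t => ρ.normed volume t • fderiv ℝ φ (x - t))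
    (bound := fun t => ρ.normed volume t * C) univ_mem
    (Eventually.of_forall fun y => (hint y).aestronglyMeasurable) (hint x) ?_ ?_ ?_ ?_).2
  · refine (ρ.continuous_normed.measurable.smul
      ((measurable_fderiv ℝ φ).comp (measurable_const.sub measurable_id))).aestronglyMeasurable
  · refine Eventually.of_forall fun t => LipschitzWith.lipschitzOnWith ?_
    refine LipschitzWith.of_dist_le_mul fun y z => ?_
    have h := hφ.dist_le_mul (y - t) (z - t)
    rw [dist_sub_right] at h
    have h0 : 0 ≤ ρ.normed volume t := ρ.nonneg_normed t
    rw [dist_smul₀, Real.coe_nnabs, abs_of_nonneg (by positivity), Real.norm_of_nonneg h0, mul_assoc]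
    gcongr
  · exact ρ.integrable_normed.mul_const _
  · have h := hφ.ae_differentiableAt (μ := (volume : Measure (Euc N)))
    have h2 := (quasiMeasurePreserving_sub_left_of_right_invariant
      (volume : Measure (Euc N)) x).ae h
    filter_upwards [h2] with t ht
    have h3 : HasFDerivAt (fun y => φ (y - t)) (fderiv ℝ φ (x - t)) x := by
      have h4 := ht.hasFDerivAt.comp x ((hasFDerivAt_id x).sub_const t)
      rw [ContinuousLinearMap.comp_id] at h4
      exact h4
    exact h3.const_smul (ρ.normed volume t)

/-- A distributional inequality `0 ≤ ∫ A · ∇φ` for a bounded measurable field `A`, valid for smooth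
nonnegative test functions, extends by mollification to Lipschitz ones. -/
lemma super_lipschitz {N : ℕ} {Ω : Set (Euc N)} (hΩ : IsOpen Ω) {A : Euc N → Euc N}
    (hA : Measurable A) {b : ℝ} (hb : ∀ x, ‖A x‖ ≤ b)
    (hsuper : ∀ φ : Euc N → ℝ, IsTestFun Ω φ → (∀ x, 0 ≤ φ x) →
      0 ≤ ∫ x in Ω, ⟪A x, gradient φ x⟫)
    {φ : Euc N → ℝ} {C : ℝ≥0} (hφ : LipschitzWith C φ) (hc : HasCompactSupport φ)
    (hs : tsupport φ ⊆ Ω) (h0 : ∀ x, 0 ≤ φ x) :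
    IntegrableOn (fun x => ⟪A x, gradient φ x⟫) Ω ∧ 0 ≤ ∫ x in Ω, ⟪A x, gradient φ x⟫ := by
  have hb0 : 0 ≤ b := (norm_nonneg _).trans (hb 0)
  simp only [inner_gradient_eq] at hsuper ⊢
  obtain ⟨δ, hδ, hδΩ⟩ := hc.isCompact.exists_cthickening_subset_open hΩ hs
  set K := Metric.cthickening δ (tsupport φ) with hK
  have hKc : IsCompact K := hc.isCompact.cthickening
  let ρ : ℕ → ContDiffBump (0 : Euc N) := fun n =>
    { rIn := δ / (n + 1) / 2
      rOut := δ / (n + 1)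
      rIn_pos := by positivity
      rIn_lt_rOut := half_lt_self (by positivity) }
  let ψ : ℕ → Euc N → ℝ := fun n =>
    convolution ((ρ n).normed volume) φ (ContinuousLinearMap.lsmul ℝ ℝ) volume
  have hρδ : ∀ n, (ρ n).rOut ≤ δ := fun n =>
    div_le_self hδ.le (by linarith [(Nat.cast_nonneg n : (0 : ℝ) ≤ n)])
  have hfd : ∀ n x, fderiv ℝ (ψ n) x = convolution ((ρ n).normed volume) (fderiv ℝ φ)
      (ContinuousLinearMap.lsmul ℝ ℝ) volume x := fun n x => (hasFDerivAt_mollify hφ (ρ n) x).fderiv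
  have hnorm : ∀ n x, ‖fderiv ℝ (ψ n) x‖ ≤ C := by
    intro n x
    rw [hfd]
    calc _ ≤ ∫ t, (ρ n).normed volume t * C := by
            refine norm_integral_le_of_norm_le ((ρ n).integrable_normed.mul_const _)
              (Eventually.of_forall fun t => ?_)
            have h0 : 0 ≤ (ρ n).normed volume t := (ρ n).nonneg_normed t
            simp only [ContinuousLinearMap.lsmul_apply]
            rw [norm_smul, Real.norm_of_nonneg h0]
            gcongr
            exact norm_fderiv_le_of_lipschitz ℝ hφ
      _ = C := by rw [integral_mul_const, (ρ n).integral_normed, one_mul]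
  have hsupp : ∀ n, tsupport (ψ n) ⊆ K := by
    intro n
    refine closure_minimal ?_ Metric.isClosed_cthickening
    refine (support_convolution_subset _).trans ?_
    rw [(ρ n).support_normed_eq]
    rintro z ⟨s, hs, y, hy, rfl⟩
    refine Metric.mem_cthickening_of_dist_le _ y _ _ (subset_tsupport _ hy) ?_
    rw [mem_ball_zero_iff] at hs
    simpa [dist_eq_norm] using hs.le.trans (hρδ n)
  have htest : ∀ n, IsTestFun Ω (ψ n) := by
    intro n
    refine ⟨?_, ?_, (hsupp n).trans hδΩ⟩
    · exact (ρ n).hasCompactSupport_normed.contDiff_convolution_left _ (ρ n).contDiff_normed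
        hφ.continuous.locallyIntegrable
    · exact hKc.of_isClosed_subset (isClosed_tsupport _) (hsupp n)
  have hpos : ∀ n x, 0 ≤ ψ n x := fun n x =>
    integral_nonneg fun t => mul_nonneg ((ρ n).nonneg_normed t) (h0 _)
  have hli : LocallyIntegrable (fderiv ℝ φ) volume := by
    refine (locallyIntegrable_const (C : ℝ)).mono
      (measurable_fderiv ℝ φ).aestronglyMeasurable (Eventually.of_forall fun x => ?_)
    simpa using norm_fderiv_le_of_lipschitz ℝ hφ
  have hρ0 : Tendsto (fun n => (ρ n).rOut) atTop (𝓝 0) :=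
    tendsto_const_nhds.div_atTop (tendsto_natCast_atTop_atTop.atTop_add tendsto_const_nhds)
  have hlim := ContDiffBump.ae_convolution_tendsto_right_of_locallyIntegrable
    (μ := (volume : Measure (Euc N))) (φ := ρ) (l := atTop) (K := 2) hρ0
    (Eventually.of_forall fun n => by change δ / (n + 1) ≤ 2 * (δ / (n + 1) / 2); linarith) hli
  have hbound : Integrable (K.indicator fun _ => (C : ℝ) * b) (volume.restrict Ω) := by
    refine Integrable.restrict ?_
    exact (integrable_indicator_iff hKc.measurableSet).2
      (integrableOn_const hKc.measure_lt_top.ne)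
  have hmeas : ∀ f : Euc N → ℝ,
      AEStronglyMeasurable (fun x => fderiv ℝ f x (A x)) (volume.restrict Ω) := fun f =>
    (isBoundedBilinearMap_apply.continuous.measurable.comp
      ((measurable_fderiv ℝ f).prodMk hA)).aestronglyMeasurable
  have hdom : ∀ f : Euc N → ℝ, tsupport f ⊆ K → (∀ x, ‖fderiv ℝ f x‖ ≤ C) → ∀ x,
      ‖fderiv ℝ f x (A x)‖ ≤ K.indicator (fun _ => (C : ℝ) * b) x := by
    intro f hf hn x
    by_cases hx : x ∈ K
    · rw [indicator_of_mem hx]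
      exact ((fderiv ℝ f x).le_opNorm _).trans (mul_le_mul (hn x) (hb x) (norm_nonneg _) C.2)
    · rw [indicator_of_notMem hx, fderiv_of_notMem_tsupport ℝ fun h => hx (hf h)]
      simp
  have hφK : tsupport φ ⊆ K := Metric.self_subset_cthickening _
  constructor
  · exact hbound.mono' (hmeas φ) (Eventually.of_forall
      (hdom φ hφK fun x => norm_fderiv_le_of_lipschitz ℝ hφ))
  · refine ge_of_tendsto (tendsto_integral_of_dominated_convergence _
      (fun n => hmeas (ψ n)) hbound (fun n => Eventually.of_forall (hdom _ (hsupp n) (hnorm n)))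
      ?_) (Eventually.of_forall fun n => hsuper (ψ n) (htest n) (hpos n))
    filter_upwards [ae_restrict_of_ae hlim] with x hx
    simp only [hfd]
    exact ((ContinuousLinearMap.apply ℝ ℝ (A x)).continuous.tendsto _).comp hx

/-! ### Real inequalities -/

lemma young_aux {p s b : ℝ} (hp : 1 < p) (hs : 0 ≤ s) (hb : 0 ≤ b) :
    p * s ^ (p - 1) * b ≤ (p - 1) * s ^ p + b ^ p := by
  have hp0 : 0 < p := by linarith
  have h := Real.geom_mean_le_arith_mean2_weighted (w₁ := (p - 1) / p) (w₂ := 1 / p)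
    (by apply div_nonneg <;> linarith) (by positivity) (Real.rpow_nonneg hs p)
    (Real.rpow_nonneg hb p) (by field_simp; ring)
  rw [← Real.rpow_mul hs, ← Real.rpow_mul hb, mul_div_cancel₀ _ hp0.ne',
    mul_div_cancel₀ _ hp0.ne', Real.rpow_one] at h
  calc p * s ^ (p - 1) * b = p * (s ^ (p - 1) * b) := by ring
    _ ≤ p * ((p - 1) / p * s ^ p + 1 / p * b ^ p) := by gcongr
    _ = _ := by field_simp

/-- The pointwise inequality behind the Hardy inequality: with `u, d` the values of the test
function and of the distance, the bracket on the left is the value of `∇H(∇d) · ∇(|u|^p d^{1-p})`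
once `∇H(∇d) · ∇d = 1`, `s` stands for `∇H(∇d) · ∇u` and `b` for `H(∇u)`. It is Young's inequality
applied to `((p-1)/p) |u| / d` and `b`. -/
lemma pointwise_aux {p u d s b : ℝ} (hp : 1 < p) (hd : 0 < d) (hs : |s| ≤ b) :
    ((p - 1) / p) ^ (p - 1) *
      (|u| ^ p * (-(p - 1) * d ^ (-(p - 1) - 1)) + d ^ (-(p - 1)) * (p * |u| ^ (p - 2) * u * s))
      ≤ b ^ p - ((p - 1) / p) ^ p * (|u| ^ p / d ^ p) := by
  have hp0 : 0 < p := by linarith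
  have hp1 : 0 < p - 1 := by linarith
  have hb : 0 ≤ b := (abs_nonneg s).trans hs
  set l := (p - 1) / p with hl
  have hl0 : 0 < l := by positivity
  have hU : |u| ^ (p - 2) * u * s ≤ |u| ^ (p - 1) * b := by
    rcases eq_or_ne u 0 with rfl | hu
    · simp [Real.zero_rpow hp1.ne']
    · have hu' : 0 < |u| := abs_pos.2 hu
      have h1 : |u| ^ (p - 1) = |u| ^ (p - 2) * |u| := by
        rw [← Real.rpow_add_one hu'.ne']; ring_nf
      rw [h1, mul_assoc, mul_assoc]
      refine mul_le_mul_of_nonneg_left ?_ (by positivity)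
      calc u * s ≤ |u * s| := le_abs_self _
        _ = |u| * |s| := abs_mul _ _
        _ ≤ _ := by gcongr
  have hy := young_aux (s := l * (|u| / d)) hp (by positivity) hb
  rw [Real.mul_rpow hl0.le (by positivity), Real.mul_rpow hl0.le (by positivity),
    Real.div_rpow (abs_nonneg u) hd.le, Real.div_rpow (abs_nonneg u) hd.le] at hy
  have e1 : d ^ (-(p - 1) - 1) = (d ^ p)⁻¹ := by rw [← Real.rpow_neg hd.le]; ring_nf
  have e2 : d ^ (-(p - 1)) = (d ^ (p - 1))⁻¹ := by rw [← Real.rpow_neg hd.le]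
  have e3 : l ^ p = l ^ (p - 1) * l := by rw [← Real.rpow_add_one hl0.ne']; ring_nf
  have e4 : (p - 1) * (1 - l) = l := by rw [hl]; field_simp; ring
  have hL : 0 ≤ l ^ (p - 1) := by positivity
  have hD : 0 ≤ (d ^ (p - 1))⁻¹ := by positivity
  have h5 : l ^ (p - 1) * ((d ^ (p - 1))⁻¹ * (p * (|u| ^ (p - 2) * u * s))) ≤
      l ^ (p - 1) * ((d ^ (p - 1))⁻¹ * (p * (|u| ^ (p - 1) * b))) := by gcongr
  rw [e1, e2]
  rw [e3] at hy ⊢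
  simp only [div_eq_mul_inv] at hy ⊢
  have e5 : l ^ (p - 1) * ((p - 1) * (1 - l)) * (|u| ^ p * (d ^ p)⁻¹) =
    l ^ (p - 1) * l * (|u| ^ p * (d ^ p)⁻¹) := by rw [e4]
  linarith

lemma lipschitz_max_rpow {c q : ℝ} (hc : 0 < c) (hq : 0 < q) :
    ∃ C : ℝ≥0, LipschitzWith C fun s : ℝ => max s c ^ (-q) := by
  have h1 : LipschitzOnWith (Real.toNNReal (q * c ^ (-q - 1))) (fun s : ℝ => s ^ (-q)) (Ici c) := by
    refine Convex.lipschitzOnWith_of_nnnorm_deriv_le (𝕜 := ℝ) ?_ ?_ (convex_Ici c)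
    · intro x hx
      exact (Real.hasDerivAt_rpow_const (Or.inl (hc.trans_le hx).ne')).differentiableAt
    · intro x hx
      have hx0 : 0 < x := hc.trans_le hx
      rw [(Real.hasDerivAt_rpow_const (Or.inl hx0.ne')).deriv]
      rw [← NNReal.coe_le_coe, coe_nnnorm, Real.coe_toNNReal _ (by positivity), norm_mul, norm_neg,
        Real.norm_of_nonneg hq.le, Real.norm_of_nonneg (by positivity)]
      gcongr ?_ * ?_
      exact Real.rpow_le_rpow_of_nonpos hc hx (by linarith)
  have h2 : LipschitzWith 1 fun s : ℝ => max s c := LipschitzWith.id.max_const c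
  refine ⟨_, lipschitzOnWith_univ.1 (h1.comp (h2.lipschitzOnWith (s := univ)) ?_)⟩
  intro s _
  exact le_max_right s c

lemma lipschitz_mul_bdd {N : ℕ} {f g : Euc N → ℝ} {C D : ℝ≥0} {M L : ℝ} (hf : LipschitzWith C f)
    (hg : LipschitzWith D g) (hM : ∀ x, |f x| ≤ M) (hL : ∀ x, |g x| ≤ L) :
    ∃ K : ℝ≥0, LipschitzWith K fun x => f x * g x := by
  have hM0 : 0 ≤ M := (abs_nonneg _).trans (hM 0)
  have hL0 : 0 ≤ L := (abs_nonneg _).trans (hL 0)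
  refine ⟨_, LipschitzWith.of_dist_le' (K := M * D + L * C) fun x y => ?_⟩
  have h1 := hf.dist_le_mul x y
  have h2 := hg.dist_le_mul x y
  rw [Real.dist_eq] at h1 h2 ⊢
  calc |f x * g x - f y * g y| = |f x * (g x - g y) + g y * (f x - f y)| := by ring_nf
    _ ≤ |f x| * |g x - g y| + |g y| * |f x - f y| := by
      rw [← abs_mul, ← abs_mul]; exact abs_add_le _ _
    _ ≤ M * (D * dist x y) + L * (C * dist x y) := by
      gcongr
      exacts [hM x, hL y]
    _ = _ := by ring

/-! ### Positivity of the distance -/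

lemma exists_pos_le_dist {N : ℕ} {H : Euc N → ℝ} (hH : IsFinslerNorm H) {Ω K : Set (Euc N)}
    (hΩ : IsOpen Ω) (hne : (frontier Ω).Nonempty) (hK : IsCompact K) (hKΩ : K ⊆ Ω) :
    ∃ c : ℝ, 0 < c ∧ ∀ x ∈ K,
      c ≤ sInf {r : ℝ | ∃ y ∈ frontier Ω, r = polarNorm H (x - y)} := by
  obtain ⟨b, hb, hbl⟩ := hH.exists_le_polarNorm
  obtain ⟨δ, hδ, hδΩ⟩ := hK.exists_cthickening_subset_open hΩ hKΩ
  refine ⟨b * δ, by positivity, fun x hx => ?_⟩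
  obtain ⟨y₀, hy₀⟩ := hne
  refine le_csInf ⟨_, y₀, hy₀, rfl⟩ ?_
  rintro r ⟨y, hy, rfl⟩
  refine le_trans ?_ (hbl _)
  gcongr
  by_contra! hlt
  -- A frontier point closer than `δ` to `K` would lie in the open set `Ω`.
  have hyΩ : y ∈ Ω := hδΩ (Metric.mem_cthickening_of_dist_le y x δ K hx
    (by rw [dist_comm, dist_eq_norm]; exact hlt.le))
  rw [hΩ.frontier_eq] at hy
  exact hy.2 hyΩ

/-- Anisotropic Hardy inequality with the anisotropic distance to the boundary,
on a domain where d_H is Lipschitz, satisfies the eikonal equation H(∇d_H) = 1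
a.e., and is distributionally Δ_{H,p}-superharmonic. -/
theorem finsler_hardy_distance_to_boundary
    (N : ℕ) (hN : 2 ≤ N) (H : Euc N → ℝ) (hH : IsFinslerNorm H)
    (p : ℝ) (hp : 1 < p)
    (Ω : Set (Euc N)) (hΩopen : IsOpen Ω) (hΩconn : IsConnected Ω)
    (dH : Euc N → ℝ)
    (hdH : ∀ x, dH x = sInf {r : ℝ | ∃ y ∈ frontier Ω, r = polarNorm H (x - y)})
    (hLip : ∃ K : ℝ≥0, LipschitzOnWith K dH Ω)
    (heik : ∀ᵐ x ∂(volume.restrict Ω), H (gradient dH x) = 1)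
    (hsuper : ∀ φ : Euc N → ℝ, IsTestFun Ω φ → (∀ x, 0 ≤ φ x) →
      0 ≤ ∫ x in Ω, ⟪gradient H (gradient dH x), gradient φ x⟫)
    (u : Euc N → ℝ) (hu : IsTestFun Ω u) :
    ((p - 1) / p) ^ p * ∫ x in Ω, |u x| ^ p / dH x ^ p
      ≤ ∫ x in Ω, H (gradient u x) ^ p := by
  obtain ⟨husm, huc, hus⟩ := hu
  have hp1 : 0 < p - 1 := by linarith
  have hp0 : 0 < p := by linarith
  have hRHS : 0 ≤ ∫ x in Ω, H (gradient u x) ^ p :=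
    integral_nonneg fun x => Real.rpow_nonneg (hH.nonneg _) _
  have hne : (frontier Ω).Nonempty := by
    by_contra hempty
    rw [not_nonempty_iff_eq_empty] at hempty
    -- With an empty boundary `dH` is the junk value `sInf ∅ = 0`, against the eikonal equation.
    have hd0 : dH = fun _ => 0 := by
      funext x
      simp [hdH, hempty]
    have hfalse : ∀ᵐ x ∂(volume.restrict Ω), False := by
      filter_upwards [heik] with x hx
      rw [hd0, gradient_fun_const, hH.zero] at hx
      exact zero_ne_one hx
    rw [eventually_false_iff_eq_bot, ae_eq_bot, Measure.restrict_eq_zero] at hfalse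
    exact (hΩopen.measure_pos volume hΩconn.nonempty).ne' hfalse
  obtain ⟨c, hc, hcd⟩ := exists_pos_le_dist hH hΩopen hne huc.isCompact hus
  simp only [← hdH] at hcd
  -- The vector field and the Lipschitz test function `|u|^p d^{1-p}`; the truncation at `c / 2`
  -- is inactive near the support of `u`.
  obtain ⟨K, hK⟩ := hLip
  obtain ⟨g, hg, hgd⟩ := hK.extend_real
  set A : Euc N → Euc N := fun x => gradient H (gradient dH x) with hAdef
  have hgradmeas : ∀ f : Euc N → ℝ, Measurable (gradient f) := fun f =>
    (InnerProductSpace.toDual ℝ (Euc N)).symm.continuous.measurable.comp (measurable_fderiv ℝ f)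
  have hA : Measurable A := (hgradmeas H).comp (hgradmeas dH)
  obtain ⟨B, hB⟩ := hH.lipschitz
  have hAb : ∀ x, ‖A x‖ ≤ B := by
    intro x
    simp only [hAdef, gradient, LinearIsometryEquiv.norm_map]
    exact norm_fderiv_le_of_lipschitz ℝ hB
  have hAle : ∀ x v, ⟪A x, v⟫ ≤ H v := by
    intro x v
    simp only [hAdef, gradient, InnerProductSpace.toDual_symm_apply]
    exact hH.fderiv_le _ _
  have hAabs : ∀ x v, |⟪A x, v⟫| ≤ H v := by
    intro x v
    refine abs_le'.2 ⟨hAle x v, ?_⟩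
    have h := hAle x (-v)
    have h2 : H (-v) = H v := by simpa using hH.homog (-1) v
    rwa [inner_neg_right, h2] at h
  obtain ⟨C₂, hC₂⟩ := lipschitz_max_rpow (half_pos hc) hp1
  have hf1 : ContDiff ℝ 1 fun x => |u x| ^ p :=
    ContDiff.norm_rpow (husm.of_le (by exact_mod_cast le_top)) hp
  have hfc : HasCompactSupport fun x => |u x| ^ p :=
    huc.comp_left (g := fun s : ℝ => |s| ^ p) (by simp [Real.zero_rpow hp0.ne'])
  obtain ⟨C₁, hC₁⟩ := ContDiff.lipschitzWith_of_hasCompactSupport hfc hf1 (by simp)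
  obtain ⟨M, hM⟩ := hfc.exists_bound_of_continuous hf1.continuous
  obtain ⟨C, hC⟩ := lipschitz_mul_bdd (L := (c / 2) ^ (-(p - 1))) hC₁ (hC₂.comp hg) hM (by
    intro x
    have h := le_max_right (g x) (c / 2)
    simp only [Function.comp]
    rw [abs_of_nonneg (Real.rpow_nonneg ((half_pos hc).le.trans h) _)]
    exact Real.rpow_le_rpow_of_nonpos (half_pos hc) h (by linarith))
  set φ : Euc N → ℝ := fun x => |u x| ^ p * ((fun s : ℝ => max s (c / 2) ^ (-(p - 1))) ∘ g) x
    with hφ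
  have hφs : tsupport φ ⊆ tsupport u := by
    refine closure_mono fun x hx hux => hx ?_
    simp [hφ, hux, Real.zero_rpow hp0.ne']
  obtain ⟨hint, hpos⟩ := super_lipschitz hΩopen hA hAb hsuper hC
    (huc.isCompact.of_isClosed_subset (isClosed_tsupport _) hφs) (hφs.trans hus) (by
      intro x
      have h := le_max_right (g x) (c / 2)
      exact mul_nonneg (Real.rpow_nonneg (abs_nonneg _) _)
        (Real.rpow_nonneg ((half_pos hc).le.trans h) _))
  have hkey : ∀ᵐ x ∂(volume.restrict Ω), ((p - 1) / p) ^ (p - 1) * ⟪A x, gradient φ x⟫ ≤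
      H (gradient u x) ^ p - ((p - 1) / p) ^ p * (|u x| ^ p / dH x ^ p) := by
    filter_upwards [heik, ae_restrict_mem hΩopen.measurableSet] with x hx hxΩ
    by_cases hxu : x ∈ tsupport u
    · have hgrad0 : gradient dH x ≠ 0 := by
        intro h0
        rw [h0, hH.zero] at hx
        exact zero_ne_one hx
      -- The gradient is nonzero, hence not a junk value.
      have hdiff : DifferentiableAt ℝ dH x := by
        by_contra hnd
        exact hgrad0 (gradient_eq_zero_of_not_differentiableAt hnd)
      have hdc : c ≤ dH x := hcd x hxu
      have hd0 : 0 < dH x := hc.trans_le hdc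
      have hev : φ =ᶠ[𝓝 x] fun y => |u y| ^ p * dH y ^ (-(p - 1)) := by
        filter_upwards [hΩopen.mem_nhds hxΩ,
          hdiff.continuousAt.eventually (lt_mem_nhds ((half_lt_self hc).trans_le hdc))] with y hy hy2
        simp only [hφ, Function.comp, ← hgd hy, max_eq_left hy2.le]
      have hu' := (husm.differentiable (by simp) x).hasFDerivAt
      have h1 := (hasDerivAt_abs_rpow (u x) hp).comp_hasFDerivAt x hu'
      have h2 := (Real.hasDerivAt_rpow_const (p := -(p - 1)) (Or.inl hd0.ne')).comp_hasFDerivAt x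
        hdiff.hasFDerivAt
      have h3 := (h1.mul h2).congr_of_eventuallyEq hev
      have hAd : fderiv ℝ dH x (A x) = 1 := by
        rw [← inner_gradient_eq]
        simp only [hAdef]
        rw [real_inner_comm, inner_gradient_eq, hH.fderiv_self hgrad0, hx]
      have hAu : |fderiv ℝ u x (A x)| ≤ H (gradient u x) := by
        rw [← inner_gradient_eq]
        exact hAabs x _
      have h4 := pointwise_aux (u := u x) hp hd0 hAu
      rw [inner_gradient_eq, h3.fderiv]
      simpa [hAd] using h4
    · have hφ0 : fderiv ℝ φ x = 0 := fderiv_of_notMem_tsupport ℝ fun h => hxu (hφs h)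
      have hux : u x = 0 := image_eq_zero_of_notMem_tsupport hxu
      rw [inner_gradient_eq, hφ0, hux]
      simpa [Real.zero_rpow hp0.ne'] using Real.rpow_nonneg (hH.nonneg (gradient u x)) p
  by_cases hI : Integrable (fun x => |u x| ^ p / dH x ^ p) (volume.restrict Ω)
  · have hHc : Continuous fun x => H (gradient u x) ^ p := by
      refine Continuous.rpow_const (hB.continuous.comp ?_) fun x => Or.inr hp0.le
      exact (InnerProductSpace.toDual ℝ (Euc N)).symm.continuous.comp
        (husm.continuous_fderiv (by simp))
    have hHs : HasCompactSupport fun x => H (gradient u x) ^ p := by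
      refine huc.mono' fun x hx => ?_
      by_contra hxu
      refine hx ?_
      simp [gradient, fderiv_of_notMem_tsupport ℝ hxu, hH.zero, Real.zero_rpow hp0.ne']
    have hJ : Integrable (fun x => H (gradient u x) ^ p) (volume.restrict Ω) :=
      (hHc.integrable_of_hasCompactSupport hHs).restrict
    have h1 := integral_mono_ae (hint.const_mul _) (hJ.sub (hI.const_mul _)) hkey
    simp only [Pi.sub_apply] at h1
    rw [integral_const_mul, integral_sub hJ (hI.const_mul _), integral_const_mul] at h1
    have h2 : 0 ≤ ((p - 1) / p) ^ (p - 1) * ∫ x in Ω, ⟪A x, gradient φ x⟫ :=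
      mul_nonneg (Real.rpow_nonneg (by positivity) _) hpos
    linarith
  · rw [integral_undef hI, mul_zero]
    exact hRHS
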